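/- Let U ⊆ ℝ^{2n} be an open bounded convex set with 0 ∈ U and Σ = ∂U, and set r̂ = min{|y| : y ∈ Σ} > 0 and R̂ = max{|y| : y ∈ Σ}. Let a > 0, let ϑ ∈ (0, r̂²/(2a)), and let φ : [0, ∞) → ℝ be differentiable with φ(0) = 0 such that for some σ > 0 one has φ'(t)/t ≥ σ for all t > 0, the function t ↦ φ'(t)/t is decreasing on (0, ∞), and lim_{t→+∞} φ'(t)/t < ϑ. Define H_a(x) = a·φ(j(x)), where j is the gauge function of U. Then there exist ε₁, ε₂ ∈ (0, 1/2) and C ≥ 0 such that (ε₁/2)|x|² − C ≤ H_a(x) ≤ (ε₂/2)|x|² + C for all x ∈ ℝ^{2n}. -/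

import Mathlib

open Set

/-!
Writing `r` for the distance from `0` to `∂U`, the ball of radius `r` is connected and avoids `∂U`,
so it lies in `U`, while `U` lies in some ball of radius `R`; hence `r · j(x) ≤ ‖x‖ ≤ R · j(x)`. As
soon as `σ ≤ φ'(t)/t ≤ ϑ` for large `t`, the functions `φ(t) - σt²/2` and `ϑt²/2 - φ(t)` are
eventually monotone, hence bounded below on `[0, ∞)`. Combining the two, `H_a` lies between
`(aσ/R²)‖x‖²/2` and `(aϑ/r²)‖x‖²/2` up to additive constants, and `aϑ/r² < 1/2` is the assumption
on `ϑ`.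
-/

open Filter Metric

section RealFunctions

variable {f f' : ℝ → ℝ}

theorem bddBelow_image_Ici_of_eventually_hasDerivAt_nonneg {b : ℝ} (hf : ContinuousOn f (Ici b))
    (hderiv : ∀ᶠ t in atTop, HasDerivAt f (f' t) t) (hnonneg : ∀ᶠ t in atTop, 0 ≤ f' t) :
    BddBelow (f '' Ici b) := by
  obtain ⟨T, hbT, hT⟩ : ∃ T ≥ b, ∀ t ≥ T, HasDerivAt f (f' t) t ∧ 0 ≤ f' t :=
    (atTop_basis' b).eventually_iff.1 (hderiv.and hnonneg)
  have hmono : MonotoneOn f (Ici T) :=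
    monotoneOn_of_hasDerivWithinAt_nonneg (convex_Ici T) (hf.mono (Ici_subset_Ici.2 hbT))
      (fun t ht ↦ (hT t (interior_subset ht)).1.hasDerivWithinAt)
      (fun t ht ↦ (hT t (interior_subset ht)).2)
  rw [← Icc_union_Ici_eq_Ici hbT, image_union, bddBelow_union]
  exact ⟨isCompact_Icc.bddBelow_image (hf.mono Icc_subset_Ici_self),
    hmono.map_bddBelow Subset.rfl ⟨T, fun _ ht ↦ ht, self_mem_Ici⟩⟩

theorem exists_forall_half_mul_sq_sub_le {c : ℝ} (hf : ContinuousOn f (Ici 0))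
    (hderiv : ∀ᶠ t in atTop, HasDerivAt f (f' t) t) (hc : ∀ᶠ t in atTop, c ≤ f' t / t) :
    ∃ C, ∀ t ≥ 0, c / 2 * t ^ 2 - C ≤ f t := by
  have hderiv_sub : ∀ᶠ t in atTop, HasDerivAt (fun t ↦ f t - c / 2 * t ^ 2) (f' t - c * t) t := by
    filter_upwards [hderiv] with t ht
    exact (ht.sub ((hasDerivAt_pow 2 t).const_mul (c / 2))).congr_deriv (by ring)
  have hderiv_nonneg : ∀ᶠ t in atTop, 0 ≤ f' t - c * t := by
    filter_upwards [hc, eventually_gt_atTop 0] with t hct ht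
    exact sub_nonneg.2 ((le_div_iff₀ ht).1 hct)
  obtain ⟨m, hm⟩ := bddBelow_image_Ici_of_eventually_hasDerivAt_nonneg
    (f := fun t ↦ f t - c / 2 * t ^ 2) (hf.sub (by fun_prop)) hderiv_sub hderiv_nonneg
  refine ⟨-m, fun t ht ↦ ?_⟩
  linarith [hm (mem_image_of_mem _ (mem_Ici.2 ht))]

theorem exists_forall_le_half_mul_sq_add {c : ℝ} (hf : ContinuousOn f (Ici 0))
    (hderiv : ∀ᶠ t in atTop, HasDerivAt f (f' t) t) (hc : ∀ᶠ t in atTop, f' t / t ≤ c) :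
    ∃ C, ∀ t ≥ 0, f t ≤ c / 2 * t ^ 2 + C := by
  obtain ⟨C, hC⟩ := exists_forall_half_mul_sq_sub_le (f := fun t ↦ -f t) (f' := fun t ↦ -f' t)
    (c := -c) hf.neg (hderiv.mono fun _ ht ↦ ht.neg)
    (hc.mono fun _ ht ↦ by simpa only [neg_div] using neg_le_neg ht)
  exact ⟨C, fun t ht ↦ by linarith [hC t ht]⟩

end RealFunctions

theorem subset_of_isPreconnected_of_disjoint_frontier {X : Type*} [TopologicalSpace X] {s u : Set X}
    (hs : IsPreconnected s) (hsu : (s ∩ u).Nonempty) (hdisj : Disjoint s (frontier u)) : s ⊆ u := by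
  have hcover : s ⊆ interior u ∪ interior uᶜ := by
    rw [← compl_frontier_eq_union_interior]
    exact hdisj.subset_compl_right
  obtain ⟨x, hxs, hxu⟩ := hsu
  have hx : x ∈ interior u :=
    (hcover hxs).resolve_right fun hxuc ↦ interior_subset hxuc hxu
  refine (hs.subset_left_of_subset_union isOpen_interior isOpen_interior ?_ hcover
    ⟨x, hxs, hx⟩).trans interior_subset
  exact disjoint_compl_right.mono interior_subset interior_subset

theorem sInf_norm_image_eq_infDist_zero {E : Type*} [SeminormedAddCommGroup E] (s : Set E) :
    sInf (norm '' s) = infDist 0 s := by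
  simp only [infDist_eq_iInf, sInf_image', dist_zero_left]

theorem ball_infDist_frontier_subset {E : Type*} [SeminormedAddCommGroup E] [NormedSpace ℝ E]
    {U : Set E} {x : E} (hx : x ∈ U) : ball x (infDist x (frontier U)) ⊆ U := by
  obtain hr | hr := le_or_gt (infDist x (frontier U)) 0
  · simp only [ball_eq_empty.2 hr, empty_subset]
  · exact subset_of_isPreconnected_of_disjoint_frontier
      (convex_ball _ _).isPreconnected ⟨x, mem_ball_self hr, hx⟩ disjoint_ball_infDist

section Gauge

variable {E : Type*} [NormedAddCommGroup E] [NormedSpace ℝ E] {U : Set E}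

theorem exists_forall_norm_le_mul_gauge (hU : Absorbent ℝ U) (hUbdd : Bornology.IsBounded U) :
    ∃ R > 0, ∀ x, ‖x‖ ≤ R * gauge U x := by
  obtain ⟨R, hR, hUR⟩ := hUbdd.subset_closedBall_lt 0 0
  exact ⟨R, hR, fun x ↦ (div_le_iff₀' hR).1
    (le_gauge_of_subset_closedBall hU hR.le hUR)⟩

theorem exists_forall_half_mul_sq_norm_sub_le_comp_gauge {f f' : ℝ → ℝ} {c : ℝ} (hU : Absorbent ℝ U)
    (hUbdd : Bornology.IsBounded U) (hf : ContinuousOn f (Ici 0))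
    (hderiv : ∀ᶠ t in atTop, HasDerivAt f (f' t) t) (hc₀ : 0 < c)
    (hc : ∀ᶠ t in atTop, c ≤ f' t / t) :
    ∃ ε > 0, ∃ C, ∀ x, ε / 2 * ‖x‖ ^ 2 - C ≤ f (gauge U x) := by
  obtain ⟨R, hR, hnorm⟩ := exists_forall_norm_le_mul_gauge hU hUbdd
  obtain ⟨C, hC⟩ := exists_forall_half_mul_sq_sub_le hf hderiv hc
  refine ⟨c / R ^ 2, by positivity, C, fun x ↦ ?_⟩
  calc c / R ^ 2 / 2 * ‖x‖ ^ 2 - C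
      ≤ c / R ^ 2 / 2 * (R * gauge U x) ^ 2 - C := by gcongr; exact hnorm x
    _ = c / 2 * gauge U x ^ 2 - C := by field_simp
    _ ≤ f (gauge U x) := hC _ (gauge_nonneg x)

theorem exists_forall_comp_gauge_le_half_mul_sq_norm_add {f f' : ℝ → ℝ} {c r : ℝ} (hr : 0 < r)
    (hball : ball 0 r ⊆ U) (hf : ContinuousOn f (Ici 0))
    (hderiv : ∀ᶠ t in atTop, HasDerivAt f (f' t) t) (hc₀ : 0 ≤ c)
    (hc : ∀ᶠ t in atTop, f' t / t ≤ c) :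
    ∃ C, ∀ x, f (gauge U x) ≤ c / r ^ 2 / 2 * ‖x‖ ^ 2 + C := by
  obtain ⟨C, hC⟩ := exists_forall_le_half_mul_sq_add hf hderiv hc
  refine ⟨C, fun x ↦ ?_⟩
  calc f (gauge U x)
      ≤ c / 2 * gauge U x ^ 2 + C := hC _ (gauge_nonneg x)
    _ = c / r ^ 2 / 2 * (r * gauge U x) ^ 2 + C := by field_simp
    _ ≤ c / r ^ 2 / 2 * ‖x‖ ^ 2 + C := by
        gcongr
        exacts [mul_nonneg hr.le (gauge_nonneg x), mul_gauge_le_norm hball]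

theorem Hamiltonian_quadratic_bounds_general (hUbdd : Bornology.IsBounded U) (h0U : 0 ∈ U)
    {a ϑ σ : ℝ} (ha : 0 < a) (hϑ : ϑ < sInf (norm '' frontier U) ^ 2 / (2 * a))
    {φ φ' : ℝ → ℝ} (hφ : ContinuousOn φ (Ici 0)) (hφ' : ∀ᶠ t in atTop, HasDerivAt φ (φ' t) t)
    (hσ : 0 < σ) (hlow : ∀ᶠ t in atTop, σ ≤ φ' t / t) (hup : ∀ᶠ t in atTop, φ' t / t ≤ ϑ) :
    ∃ ε₁ ε₂ C : ℝ, ε₁ ∈ Ioo (0 : ℝ) (1 / 2) ∧ ε₂ ∈ Ioo (0 : ℝ) (1 / 2) ∧ 0 ≤ C ∧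
      ∀ x : E, ε₁ / 2 * ‖x‖ ^ 2 - C ≤ a * φ (gauge U x) ∧
        a * φ (gauge U x) ≤ ε₂ / 2 * ‖x‖ ^ 2 + C := by
  have hϑ₀ : 0 < ϑ := by
    obtain ⟨t, hσt, htϑ⟩ := (hlow.and hup).exists
    exact hσ.trans_le (hσt.trans htϑ)
  rw [sInf_norm_image_eq_infDist_zero, lt_div_iff₀ (by positivity)] at hϑ
  set r := infDist 0 (frontier U)
  have hr : 0 < r := infDist_nonneg.lt_of_ne' <|
    (pow_ne_zero_iff two_ne_zero).1 ((by positivity : 0 < ϑ * (2 * a)).trans hϑ).ne'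
  have hball : ball 0 r ⊆ U := ball_infDist_frontier_subset h0U
  obtain ⟨ε, hε, C₁, hC₁⟩ := exists_forall_half_mul_sq_norm_sub_le_comp_gauge
    ((absorbent_ball_zero hr).mono hball) hUbdd hφ hφ' hσ hlow
  obtain ⟨C₂, hC₂⟩ := exists_forall_comp_gauge_le_half_mul_sq_norm_add hr hball hφ hφ' hϑ₀.le hup
  set C := max 0 (max C₁ C₂)
  have hC₁C : C₁ ≤ C := (le_max_left _ _).trans (le_max_right _ _)
  have hC₂C : C₂ ≤ C := (le_max_right _ _).trans (le_max_right _ _)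
  refine ⟨min (a * ε) (1 / 4), a * (ϑ / r ^ 2), a * C,
    ⟨by positivity, (min_le_right _ _).trans_lt (by norm_num)⟩, ⟨by positivity, ?_⟩,
    mul_nonneg ha.le (le_max_left _ _), fun x ↦ ⟨?_, ?_⟩⟩
  · rw [← mul_div_assoc, div_lt_iff₀ (by positivity)]
    linarith
  · calc min (a * ε) (1 / 4) / 2 * ‖x‖ ^ 2 - a * C
        ≤ a * ε / 2 * ‖x‖ ^ 2 - a * C₁ := by gcongr; exact min_le_left _ _
      _ = a * (ε / 2 * ‖x‖ ^ 2 - C₁) := by ring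
      _ ≤ a * φ (gauge U x) := by gcongr; exact hC₁ x
  · calc a * φ (gauge U x)
        ≤ a * (ϑ / r ^ 2 / 2 * ‖x‖ ^ 2 + C₂) := by gcongr; exact hC₂ x
      _ = a * (ϑ / r ^ 2) / 2 * ‖x‖ ^ 2 + a * C₂ := by ring
      _ ≤ a * (ϑ / r ^ 2) / 2 * ‖x‖ ^ 2 + a * C := by gcongr

end Gauge

/-- Quadratic two-sided growth bounds for the Hamiltonian `H_a(x) = a·φ(j(x))`, where `j`
is the gauge function of `U`, with constants `ε₁, ε₂ ∈ (0, 1/2)`. -/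
theorem Hamiltonian_quadratic_bounds
    (n : ℕ) (U : Set (EuclideanSpace ℝ (Fin (2 * n))))
    (hUopen : IsOpen U) (hUbdd : Bornology.IsBounded U) (hUconv : Convex ℝ U)
    (h0U : (0 : EuclideanSpace ℝ (Fin (2 * n))) ∈ U)
    (a ϑ : ℝ) (ha : 0 < a)
    (hϑ0 : 0 < ϑ) (hϑ1 : ϑ < (sInf (norm '' frontier U)) ^ 2 / (2 * a))
    (φ φ' : ℝ → ℝ)
    (hφd : ∀ t ∈ Set.Ici (0 : ℝ), HasDerivWithinAt φ (φ' t) (Set.Ici 0) t)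
    (hφ0 : φ 0 = 0)
    (σ : ℝ) (hσ : 0 < σ) (hlow : ∀ t > (0 : ℝ), σ ≤ φ' t / t)
    (hdec : AntitoneOn (fun t => φ' t / t) (Set.Ioi 0))
    (hlim : ∃ L : ℝ, Filter.Tendsto (fun t => φ' t / t) Filter.atTop (nhds L) ∧ L < ϑ) :
    ∃ ε₁ ε₂ C : ℝ, ε₁ ∈ Set.Ioo (0 : ℝ) (1 / 2) ∧ ε₂ ∈ Set.Ioo (0 : ℝ) (1 / 2) ∧ 0 ≤ C ∧
      ∀ x : EuclideanSpace ℝ (Fin (2 * n)),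
        ε₁ / 2 * ‖x‖ ^ 2 - C ≤ a * φ (gauge U x) ∧
        a * φ (gauge U x) ≤ ε₂ / 2 * ‖x‖ ^ 2 + C := by
  obtain ⟨L, hL, hLϑ⟩ := hlim
  exact Hamiltonian_quadratic_bounds_general hUbdd h0U ha hϑ1
    (fun t ht ↦ (hφd t ht).continuousWithinAt)
    ((eventually_gt_atTop 0).mono fun t ht ↦ (hφd t ht.le).hasDerivAt (Ici_mem_nhds ht)) hσ
    ((eventually_gt_atTop 0).mono hlow) (hL.eventually_le_const hLϑ)
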